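/- arXiv:cond-mat/0309135 — 2 statements merged into one kernel-verified Lean document; each statement's English description precedes it below -/
import Mathlib

section
/- First-level reduction theorem for grading (−,−,+): let T be a representation of the graded Yang–Baxter algebra with grading (−,−,+) on H, let a₁ be a function, and let H₀ = { Φ ∈ H : A(λ)Φ = a₁(λ)Φ and C^1(λ)Φ = C^2(λ)Φ = 0 for all λ }. Fix pairwise distinct Bethe roots λ₁,…,λ_N with all occurring denominators nonzero, and let T̃(λ) be the auxiliary monodromy matrix built from them. Suppose ψ ∈ (ℂ²)^{⊗N} ⊗ H has all components ψ^{i₁…i_N} ∈ H₀ and satisfies (str T̃(λ)) ψ = Λ̃(λ) ψ for all λ, where str T̃(λ) = T̃^1_1(λ) − T̃^2_2(λ), and suppose the Bethe ansatz equations a₁(λ_j) ∏_{k≠j} a(λ_k−λ_j)/a(λ_j−λ_k) = Λ̃(λ_j) hold for j = 1,…,N. Then Φ = Σ_{i₁,…,i_N ∈ {1,2}} B_{i₁}(λ₁)⋯B_{i_N}(λ_N) ψ^{i₁…i_N} satisfies t(λ)Φ = Λ(λ)Φ, where t(λ) = −T^1_1(λ) − T^2_2(λ) + T^3_3(λ)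 and Λ(λ) = −a₁(λ) ∏_{j=1}^{N} 1/a(λ−λ_j) − Λ̃(λ) ∏_{j=1}^{N} 1/a(λ_j−λ). -/
open scoped BigOperators

noncomputable section

namespace Gl12

/-- The sign `(−1)^x` for `x ∈ ℤ₂`. -/
def eps (x : ZMod 2) : ℂ := if x = 0 then 1 else -1

/-- `a(λ) = λ/(λ + ic)`. -/
def af (c l : ℂ) : ℂ := l / (l + Complex.I * c)

/-- `b(λ) = ic/(λ + ic)`. -/
def bf (c l : ℂ) : ℂ := Complex.I * c / (l + Complex.I * c)

/-- The R-matrix `R_p(λ)^{αγ}_{βδ} = a(λ)(−1)^{p(α)p(γ)} δ^α_β δ^γ_δ + b(λ) δ^α_δ δ^γ_β`;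
rows are indexed by `(α, γ)` and columns by `(β, δ)`. -/
def Rmat {ι : Type*} [DecidableEq ι] (c : ℂ) (p : ι → ZMod 2) (l : ℂ) :
    Matrix (ι × ι) (ι × ι) ℂ := fun x y =>
  af c l * eps (p x.1 * p x.2) * (if x.1 = y.1 then 1 else 0) * (if x.2 = y.2 then 1 else 0)
    + bf c l * (if x.1 = y.2 then 1 else 0) * (if x.2 = y.1 then 1 else 0)

/-- `ř_p(λ)^{αγ}_{βδ} = R_p(λ)^{γα}_{βδ}`. -/
def Rcheck {ι : Type*} [DecidableEq ι] (c : ℂ) (p : ι → ZMod 2) (l : ℂ) :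
    Matrix (ι × ι) (ι × ι) ℂ := fun x y => Rmat c p l (x.2, x.1) y

/-- Super tensor product of (possibly rectangular) matrices with entries in an algebra:
`(A ⊗_p B)^{αγ}_{βδ} = (−1)^{(p(α)+p(β))p(γ)} A^α_β B^γ_δ`, where `p1` is the parity of the
row indices of `A`, `q1` the parity of the column indices of `A`, and `p2` the parity of the
row indices of `B`. -/
def stp {A : Type*} [NonUnitalNonAssocSemiring A] [Module ℂ A]
    {ι₁ ι₂ κ₁ κ₂ : Type*} (p1 : ι₁ → ZMod 2) (q1 : ι₂ → ZMod 2) (p2 : κ₁ → ZMod 2)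
    (M : Matrix ι₁ ι₂ A) (N : Matrix κ₁ κ₂ A) : Matrix (ι₁ × κ₁) (ι₂ × κ₂) A :=
  fun x y => eps ((p1 x.1 + q1 y.1) * p2 x.2) • (M x.1 y.1 * N x.2 y.2)

/-- Product of a scalar matrix with a matrix with entries in a module. -/
def cmulE {A : Type*} [AddCommMonoid A] [Module ℂ A] {ι κ μ : Type*} [Fintype κ]
    (M : Matrix ι κ ℂ) (X : Matrix κ μ A) : Matrix ι μ A :=
  fun i m => ∑ k, M i k • X k m

/-- Product of a matrix with entries in a module with a scalar matrix. -/
def emulC {A : Type*} [AddCommMonoid A] [Module ℂ A] {ι κ μ : Type*} [Fintype κ]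
    (X : Matrix ι κ A) (M : Matrix κ μ ℂ) : Matrix ι μ A :=
  fun i m => ∑ k, M k m • X i k

/-- The grading `(+,−,−)`: `p(1)=0, p(2)=p(3)=1`. -/
def gpmm : Fin 3 → ZMod 2 := ![0, 1, 1]

/-- The grading `(−,+,−)`: `p(2)=0, p(1)=p(3)=1`. -/
def gmpm : Fin 3 → ZMod 2 := ![1, 0, 1]

/-- The grading `(−,−,+)`: `p(3)=0, p(1)=p(2)=1`. -/
def gmmp : Fin 3 → ZMod 2 := ![1, 1, 0]

/-- The induced grading `g' = (+,−)`: `p'(1)=0, p'(2)=1`. -/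
def ppar : Fin 2 → ZMod 2 := ![0, 1]

/-- Trivial parity on a one-element index set (the row index of the row vector `B`). -/
def punit : Fin 1 → ZMod 2 := fun _ => 0

/-- A representation of the graded Yang–Baxter algebra with grading `p` on `H`:
`ř_p(λ−μ) (T(λ) ⊗_p T(μ)) = (T(μ) ⊗_p T(λ)) ř_p(λ−μ)` for all `λ, μ` in the domain `D`
(whenever `ř_p(λ−μ)` is defined, i.e. `λ − μ + ic ≠ 0`). -/
def IsRep {H : Type*} [AddCommGroup H] [Module ℂ H] (c : ℂ) (p : Fin 3 → ZMod 2) (D : Set ℂ)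
    (T : ℂ → Matrix (Fin 3) (Fin 3) (Module.End ℂ H)) : Prop :=
  ∀ l ∈ D, ∀ m ∈ D, l - m + Complex.I * c ≠ 0 →
    cmulE (Rcheck c p (l - m)) (stp p p p (T l) (T m)) =
      emulC (stp p p p (T m) (T l)) (Rcheck c p (l - m))

end Gl12

namespace Gl12

/-- The graded local projection operators on `(ℂⁿ)^{⊗L}` (realized as the space of functions
`(Fin L → Fin n) → ℂ`): `e_j{}_α^β = Σ_{γ₁,…,γ_{j−1}} (−1)^{(p(α)+p(β))(p(γ₁)+⋯+p(γ_{j−1}))}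
e_{γ₁}^{γ₁} ⊗ ⋯ ⊗ e_{γ_{j−1}}^{γ_{j−1}} ⊗ e_α^β ⊗ I^{⊗(L−j)}`. -/
def gradedE {n L : ℕ} (p : Fin n → ZMod 2) (j : Fin L) (α β : Fin n) :
    Matrix (Fin L → Fin n) (Fin L → Fin n) ℂ := fun σ τ =>
  if σ j = α ∧ τ j = β ∧ ∀ k, k ≠ j → σ k = τ k then
    eps ((p α + p β) * ∑ k ∈ Finset.univ.filter (fun k => k < j), p (σ k))
  else 0

end Gl12

namespace Gl12

variable {H : Type*} [AddCommGroup H] [Module ℂ H]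

/-- The component `B_i(λ)` of the row `B(λ) = (T^1_2(λ), T^1_3(λ))`. -/
def Bop (T : ℂ → Matrix (Fin 3) (Fin 3) (Module.End ℂ H)) (l : ℂ) (i : Fin 2) :
    Module.End ℂ H := T l 0 i.succ

/-- The entries `B_{i₁}(μ₁)⋯B_{i_N}(μ_N)` of the `N`-fold super tensor product of the rows
`B(μ_j)` (an ascending ordered product). -/
def BBrow {N : ℕ} (T : ℂ → Matrix (Fin 3) (Fin 3) (Module.End ℂ H)) (ms : Fin N → ℂ)
    (i : Fin N → Fin 2) : Module.End ℂ H :=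
  ((List.finRange N).map fun k => Bop T (ms k) (i k)).prod

/-- The list of spectral parameters `(λ, λ₁, …, λ̂_j, …, λ_N)` obtained by inserting `λ` in
front and deleting the `j`-th entry of `(λ₁, …, λ_N)`. -/
def insRow {N : ℕ} (l : ℂ) (ls : Fin N → ℂ) (j : Fin N) : Fin N → ℂ := fun m =>
  if hm : m.val = 0 then l
  else if m.val - 1 < j.val then ls ⟨m.val - 1, by omega⟩ else ls m

/-- Embedding of a matrix on `ℂ² ⊗ ℂ²` into the sites `(m, m+1)` (0-based) of `(ℂ²)^{⊗N}`,
i.e. `I₂^{⊗m} ⊗ M ⊗ I₂^{⊗(N−m−2)}`. -/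
def rEmb (N : ℕ) (m : ℕ) (M : Matrix (Fin 2 × Fin 2) (Fin 2 × Fin 2) ℂ) :
    Matrix (Fin N → Fin 2) (Fin N → Fin 2) ℂ := fun s t =>
  if h : m + 1 < N then
    M (s ⟨m, Nat.lt_of_succ_lt h⟩, s ⟨m + 1, h⟩) (t ⟨m, Nat.lt_of_succ_lt h⟩, t ⟨m + 1, h⟩) *
      (if ∀ k : Fin N, k.val ≠ m → k.val ≠ m + 1 → s k = t k then 1 else 0)
  else if s = t then 1 else 0

/-- The operator `S_{j−1} = (ř(λ_j−λ₁) ⊗ I₂^{⊗(N−2)}) ⋯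
(I₂^{⊗(j−2)} ⊗ ř(λ_j−λ_{j−1}) ⊗ I₂^{⊗(N−j)})` on `(ℂ²)^{⊗N}` (here `j` is 0-based). -/
def Sop (c : ℂ) {N : ℕ} (ls : Fin N → ℂ) (j : Fin N) :
    Matrix (Fin N → Fin 2) (Fin N → Fin 2) ℂ :=
  (List.finRange N).foldl
    (fun acc m => if m < j then acc * rEmb N m.val (Rcheck c ppar (ls j - ls m)) else acc) 1

/-- Right multiplication of a row of operators (identified with a map
`(ℂ²)^{⊗N} ⊗ H → H`) by a scalar matrix acting on `(ℂ²)^{⊗N}`. -/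
def rowMulC {N : ℕ} (Φ : (Fin N → Fin 2) → Module.End ℂ H)
    (M : Matrix (Fin N → Fin 2) (Fin N → Fin 2) ℂ) : (Fin N → Fin 2) → Module.End ℂ H :=
  fun t => ∑ s, M s t • Φ s

end Gl12

namespace Gl12

variable {H : Type*} [AddCommGroup H] [Module ℂ H]

/-- The elementary L-matrix `L_j^{(+−)}(λ) = a(λ) I₂ + b(λ) ((e_j{}_1^1, e_j{}_2^1),
(e_j{}_1^2, −e_j{}_2^2))`, a 2×2 matrix with entries in `End((ℂ²)^{⊗N})`. -/
def Lmat (c : ℂ) {N : ℕ} (j : Fin N) (l : ℂ) :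
    Matrix (Fin 2) (Fin 2) (Matrix (Fin N → Fin 2) (Fin N → Fin 2) ℂ) := fun α β =>
  af c l • (if α = β then (1 : Matrix (Fin N → Fin 2) (Fin N → Fin 2) ℂ) else 0)
    + (bf c l * (if α = 1 ∧ β = 1 then -1 else 1)) • gradedE ppar j β α

/-- The auxiliary spin-problem monodromy matrix
`T_{g'}(λ) = L_N^{(+−)}(λ_N − λ) ⋯ L_1^{(+−)}(λ_1 − λ)`. -/
def Tgp (c : ℂ) {N : ℕ} (ls : Fin N → ℂ) (l : ℂ) :
    Matrix (Fin 2) (Fin 2) (Matrix (Fin N → Fin 2) (Fin N → Fin 2) ℂ) :=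
  (List.finRange N).reverse.foldl (fun acc j => acc * Lmat c j (ls j - l)) 1

/-- `(σ^z)^{⊗N}` on `(ℂ²)^{⊗N}`. -/
def Zmat (N : ℕ) : Matrix (Fin N → Fin 2) (Fin N → Fin 2) ℂ := fun s t =>
  if s = t then ∏ k, (if s k = 0 then (1 : ℂ) else -1) else 0

/-- `M ⊗ f` for a scalar matrix `M` on `(ℂ²)^{⊗N}` and an operator `f` on `H`, viewed as a
matrix over `(ℂ²)^{⊗N}` with entries in `End(H)` (i.e. an operator on `(ℂ²)^{⊗N} ⊗ H`). -/
def extOp {N : ℕ} (M : Matrix (Fin N → Fin 2) (Fin N → Fin 2) ℂ) (f : Module.End ℂ H) :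
    Matrix (Fin N → Fin 2) (Fin N → Fin 2) (Module.End ℂ H) := fun s t => M s t • f

/-- The factor `𝒟_{(−,−,+)}(λ) = ((id ⊗ T^2_2(λ), (σ^z)^{⊗N} ⊗ T^2_3(λ)),
((σ^z)^{⊗N} ⊗ T^3_2(λ), id ⊗ T^3_3(λ)))`. -/
def DcalMMP (T : ℂ → Matrix (Fin 3) (Fin 3) (Module.End ℂ H)) (N : ℕ) (l : ℂ) :
    Matrix (Fin 2) (Fin 2)
      (Matrix (Fin N → Fin 2) (Fin N → Fin 2) (Module.End ℂ H)) :=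
  !![extOp 1 (T l 1 1), extOp (Zmat N) (T l 1 2);
     extOp (Zmat N) (T l 2 1), extOp 1 (T l 2 2)]

/-- The auxiliary monodromy matrix `T̃(λ) = 𝒟(λ) · (T_{g'}(λ) ⊗ id_H)` for grading
`(−,−,+)`, built from the Bethe roots `λ₁, …, λ_N`. -/
def TtilMMP (c : ℂ) (T : ℂ → Matrix (Fin 3) (Fin 3) (Module.End ℂ H)) {N : ℕ}
    (ls : Fin N → ℂ) (l : ℂ) :
    Matrix (Fin 2) (Fin 2)
      (Matrix (Fin N → Fin 2) (Fin N → Fin 2) (Module.End ℂ H)) :=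
  DcalMMP T N l * (Tgp c ls l).map (fun M => extOp M 1)

/-- The super trace `str T̃(λ) = T̃^1_1(λ) − T̃^2_2(λ)` of the auxiliary monodromy matrix. -/
def strTtilMMP (c : ℂ) (T : ℂ → Matrix (Fin 3) (Fin 3) (Module.End ℂ H)) {N : ℕ}
    (ls : Fin N → ℂ) (l : ℂ) :
    Matrix (Fin N → Fin 2) (Fin N → Fin 2) (Module.End ℂ H) :=
  TtilMMP c T ls l 0 0 - TtilMMP c T ls l 1 1

end Gl12

namespace Gl12

/-- Membership in the vacuum subspace `H₀`: `A(λ)Φ = a₁(λ)Φ` and `C(λ)Φ = 0` for all `λ`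
in the domain. -/
def memH0 {H : Type*} [AddCommGroup H] [Module ℂ H]
    (T : ℂ → Matrix (Fin 3) (Fin 3) (Module.End ℂ H)) (D : Set ℂ) (a₁ : ℂ → ℂ)
    (Φ : H) : Prop :=
  ∀ l ∈ D, T l 0 0 Φ = a₁ l • Φ ∧ T l 1 0 Φ = 0 ∧ T l 2 0 Φ = 0

/-! ### Auxiliary notions -/

section Aux

set_option linter.unusedSimpArgs false

/-- Sign `(-1)^{p'(α)p'(β)}`. -/
def qs (α β : Fin 2) : ℂ := if α = 1 ∧ β = 1 then -1 else 1

/-- The function `b/a`. -/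
def gf (c x : ℂ) : ℂ := Complex.I * c / x

theorem qs_comm (α β : Fin 2) : qs α β = qs β α := by
  unfold qs; simp only [and_comm]

theorem qs_sq (α β : Fin 2) : qs α β * qs α β = 1 := by
  unfold qs; split_ifs <;> norm_num

theorem af_ne {c x : ℂ} (h : af c x ≠ 0) : x ≠ 0 ∧ x + Complex.I * c ≠ 0 := by
  unfold af at h
  constructor
  · rintro rfl; simp at h
  · intro h'; rw [h'] at h; simp at h

theorem af_inv {c x : ℂ} (h : af c x ≠ 0) : (af c x)⁻¹ = 1 + gf c x := by
  obtain ⟨h1, h2⟩ := af_ne h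
  unfold af gf; field_simp

theorem bf_eq {c x : ℂ} (h : af c x ≠ 0) : bf c x = af c x * gf c x := by
  obtain ⟨h1, h2⟩ := af_ne h
  unfold af gf bf; field_simp

theorem gf_neg' (c x y : ℂ) : gf c (x - y) = - gf c (y - x) := by
  unfold gf; rw [← neg_sub y x, div_neg]

theorem gf_id1 {c l m n : ℂ} (h1 : l - m ≠ 0) (h2 : m - n ≠ 0) (h3 : l - n ≠ 0) :
    gf c (l - n) * (1 - gf c (l - m)) + gf c (l - m) * gf c (m - n)
      = gf c (l - n) * (1 + gf c (m - n)) := by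
  unfold gf; field_simp; ring

theorem gf_id2 {c l m n : ℂ} (h1 : l - m ≠ 0) (h2 : m - n ≠ 0) (h3 : l - n ≠ 0) :
    gf c (l - m) * gf c (m - n) - gf c (l - n) * gf c (l - m)
      = gf c (l - n) * gf c (m - n) := by
  unfold gf; field_simp; ring

theorem sum_cons {M : Type*} [AddCommMonoid M] {N : ℕ} (f : (Fin (N + 1) → Fin 2) → M) :
    ∑ i, f i = ∑ δ : Fin 2, ∑ i : Fin N → Fin 2, f (Fin.cons δ i) := by
  rw [← Fintype.sum_prod_type']
  exact (Fintype.sum_equiv (Fin.consEquiv (fun _ => Fin 2)) _ _ (fun x => rfl)).symm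

variable {H : Type*} [AddCommGroup H] [Module ℂ H]

theorem rep_entry {c : ℂ} {D : Set ℂ} {T : ℂ → Matrix (Fin 3) (Fin 3) (Module.End ℂ H)}
    (hT : IsRep c gmmp D T) {l m : ℂ} (hl : l ∈ D) (hm : m ∈ D)
    (h : l - m + Complex.I * c ≠ 0) (α γ β δ : Fin 3) :
    (af c (l - m) * eps (gmmp α * gmmp γ) * eps ((gmmp γ + gmmp β) * gmmp α)) •
        (T l γ β * T m α δ)
      + (bf c (l - m) * eps ((gmmp α + gmmp β) * gmmp γ)) • (T l α β * T m γ δ)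
    = (af c (l - m) * eps (gmmp β * gmmp δ) * eps ((gmmp α + gmmp δ) * gmmp γ)) •
        (T m α δ * T l γ β)
      + (bf c (l - m) * eps ((gmmp α + gmmp β) * gmmp γ)) • (T m α β * T l γ δ) := by
  have h0 := congrFun (congrFun (hT l hl m hm h) (α, γ)) (β, δ)
  simp only [cmulE, emulC, Rcheck, Rmat, stp, Fintype.sum_prod_type, smul_smul] at h0
  simp only [add_mul, add_smul, Finset.sum_ite_irrel, Finset.sum_add_distrib, mul_ite, mul_one, mul_zero, ite_mul, zero_mul, ite_smul, zero_smul,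
    Finset.sum_ite_eq, Finset.sum_ite_eq', Finset.mem_univ, if_true, Finset.sum_const_zero] at h0
  simp only [add_mul, mul_comm (gmmp γ) (gmmp α), mul_comm (gmmp δ) (gmmp β)] at h0 ⊢
  exact h0

theorem rel_AB {c : ℂ} {D : Set ℂ} {T : ℂ → Matrix (Fin 3) (Fin 3) (Module.End ℂ H)}
    (hT : IsRep c gmmp D T) {l m : ℂ} (hl : l ∈ D) (hm : m ∈ D)
    (h : af c (m - l) ≠ 0) (δ : Fin 2) (v : H) :
    T l 0 0 (Bop T m δ v) = (1 + gf c (l - m)) • Bop T m δ (T l 0 0 v)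
      - gf c (l - m) • Bop T l δ (T m 0 0 v) := by
  have h0 := rep_entry hT hm hl (af_ne h).2 0 0 δ.succ 0
  have h1 := congrArg (fun f => (af c (m - l))⁻¹ • f v) h0
  rw [bf_eq h] at h1
  rw [gf_neg' c l m]
  fin_cases δ <;>
  · simp [eps, gmmp, Bop, smul_smul, mul_assoc, h, smul_add, inv_mul_cancel_left₀ h,
      CharTwo.add_self_eq_zero] at h1 ⊢
    first
    | linear_combination (norm := module) (-1 : ℂ) • h1
    | linear_combination (norm := module) (1 : ℂ) • h1

theorem rel_BB {c : ℂ} {D : Set ℂ} {T : ℂ → Matrix (Fin 3) (Fin 3) (Module.End ℂ H)}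
    (hT : IsRep c gmmp D T) {l m : ℂ} (hl : l ∈ D) (hm : m ∈ D)
    (h : af c (l - m) ≠ 0) (β δ : Fin 2) (v : H) :
    (1 - gf c (l - m)) • Bop T l β (Bop T m δ v) = qs β δ • Bop T m δ (Bop T l β v)
      - gf c (l - m) • Bop T m β (Bop T l δ v) := by
  have h0 := rep_entry hT hl hm (af_ne h).2 0 0 β.succ δ.succ
  have h1 := congrArg (fun f => (af c (l - m))⁻¹ • f v) h0
  rw [bf_eq h] at h1
  fin_cases β <;> fin_cases δ <;>
  · simp [eps, gmmp, Bop, qs, smul_smul, mul_assoc, h, smul_add, inv_mul_cancel_left₀ h,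
      CharTwo.add_self_eq_zero] at h1 ⊢
    first
    | linear_combination (norm := module) (-1 : ℂ) • h1
    | linear_combination (norm := module) (1 : ℂ) • h1

theorem rel_DB {c : ℂ} {D : Set ℂ} {T : ℂ → Matrix (Fin 3) (Fin 3) (Module.End ℂ H)}
    (hT : IsRep c gmmp D T) {l m : ℂ} (hl : l ∈ D) (hm : m ∈ D)
    (h : af c (l - m) ≠ 0) (γ β δ : Fin 2) (v : H) :
    T l γ.succ β.succ (Bop T m δ v) =
      (qs γ δ * qs β δ) • Bop T m δ (T l γ.succ β.succ v)
      - (gf c (l - m) * qs γ β) • Bop T m β (T l γ.succ δ.succ v)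
      + (gf c (l - m) * qs γ β) • Bop T l β (T m γ.succ δ.succ v) := by
  have h0 := rep_entry hT hl hm (af_ne h).2 0 γ.succ β.succ δ.succ
  have h1 := congrArg (fun f => (af c (l - m))⁻¹ • f v) h0
  rw [bf_eq h] at h1
  fin_cases γ <;> fin_cases β <;> fin_cases δ <;>
  · simp [eps, gmmp, Bop, qs, smul_smul, mul_assoc, h, smul_add, inv_mul_cancel_left₀ h,
      CharTwo.add_self_eq_zero] at h1 ⊢
    first
    | linear_combination (norm := module) (-1 : ℂ) • h1
    | linear_combination (norm := module) (1 : ℂ) • h1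

end Aux

section Aux2

set_option linter.unusedSimpArgs false

variable {H : Type*} [AddCommGroup H] [Module ℂ H]

/-- The slice `ψ ↦ ψ^{δ,·}`. -/
def slice {N : ℕ} (δ : Fin 2) :
    ((Fin (N + 1) → Fin 2) → H) →ₗ[ℂ] ((Fin N → Fin 2) → H) :=
  LinearMap.funLeft ℂ H (fun i => (Fin.cons δ i : Fin (N + 1) → Fin 2))

theorem slice_apply {N : ℕ} (δ : Fin 2) (ψ : (Fin (N + 1) → Fin 2) → H) (i : Fin N → Fin 2) :
    slice δ ψ i = ψ (Fin.cons δ i) := rfl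

/-- `ψ ↦ Σ B_{i₁}(λ₁)⋯B_{i_N}(λ_N) ψ^{i₁…i_N}`. -/
def Fmap {N : ℕ} (T : ℂ → Matrix (Fin 3) (Fin 3) (Module.End ℂ H)) (ls : Fin N → ℂ) :
    ((Fin N → Fin 2) → H) →ₗ[ℂ] H :=
  ∑ i, (BBrow T ls i) ∘ₗ LinearMap.proj i

theorem Fmap_apply {N : ℕ} (T : ℂ → Matrix (Fin 3) (Fin 3) (Module.End ℂ H)) (ls : Fin N → ℂ)
    (ψ : (Fin N → Fin 2) → H) : Fmap T ls ψ = ∑ i, BBrow T ls i (ψ i) := by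
  simp [Fmap]

theorem Fmap_zero (T : ℂ → Matrix (Fin 3) (Fin 3) (Module.End ℂ H)) (ls : Fin 0 → ℂ)
    (ψ : (Fin 0 → Fin 2) → H) : Fmap T ls ψ = ψ Fin.elim0 := by
  rw [Fmap_apply]
  simp [BBrow]
  congr 1

theorem Fmap_succ {N : ℕ} (T : ℂ → Matrix (Fin 3) (Fin 3) (Module.End ℂ H))
    (ls : Fin (N + 1) → ℂ) (ψ : (Fin (N + 1) → Fin 2) → H) :
    Fmap T ls ψ = ∑ δ, Bop T (ls 0) δ (Fmap T (Fin.tail ls) (slice δ ψ)) := by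
  simp only [Fmap_apply]
  rw [sum_cons]
  refine Finset.sum_congr rfl fun δ _ => ?_
  rw [map_sum]
  refine Finset.sum_congr rfl fun i _ => ?_
  simp only [BBrow, List.finRange_succ, List.map_cons, List.map_map, List.prod_cons,
    Fin.cons_zero, slice_apply]
  rfl

/-- Recursive form of the action of the auxiliary monodromy matrix. -/
def Tn (c : ℂ) (T : ℂ → Matrix (Fin 3) (Fin 3) (Module.End ℂ H)) (l : ℂ) :
    ∀ {N : ℕ}, Fin 2 → Fin 2 → (Fin N → ℂ) → ((Fin N → Fin 2) → H) → ((Fin N → Fin 2) → H)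
  | 0, γ, β, _, ψ => fun i => T l γ.succ β.succ (ψ i)
  | _ + 1, γ, β, ls, ψ => fun i =>
      (af c (ls 0 - l) * (qs γ (i 0) * qs β (i 0))) •
          Tn c T l γ β (Fin.tail ls) (slice (i 0) ψ) (Fin.tail i)
        + if i 0 = β then
          (bf c (ls 0 - l) * qs γ β) • ∑ κ, Tn c T l γ κ (Fin.tail ls) (slice κ ψ) (Fin.tail i)
          else 0

theorem slice_Tn (c : ℂ) (T : ℂ → Matrix (Fin 3) (Fin 3) (Module.End ℂ H)) (l : ℂ) {N : ℕ}
    (γ β δ : Fin 2) (ls : Fin (N + 1) → ℂ) (ψ : (Fin (N + 1) → Fin 2) → H) :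
    slice δ (Tn c T l γ β ls ψ) =
      (af c (ls 0 - l) * (qs γ δ * qs β δ)) • Tn c T l γ β (Fin.tail ls) (slice δ ψ)
        + if δ = β then
          (bf c (ls 0 - l) * qs γ β) • ∑ κ, Tn c T l γ κ (Fin.tail ls) (slice κ ψ)
          else 0 := by
  funext i
  rw [slice_apply]
  simp only [Tn, Fin.cons_zero, Fin.tail_cons]
  split_ifs <;> simp

/-- Coefficients of the unwanted terms for `A`. -/
def Xh (c : ℂ) (T : ℂ → Matrix (Fin 3) (Fin 3) (Module.End ℂ H)) :
    ∀ {N : ℕ}, (Fin N → ℂ) → Fin N → Fin 2 → (((Fin N → Fin 2) → H) →ₗ[ℂ] H)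
  | 0, _, _, _ => 0
  | N + 1, ls, j, β =>
    Fin.cases (motive := fun _ => ((Fin (N + 1) → Fin 2) → H) →ₗ[ℂ] H)
      (Fmap T (Fin.tail ls) ∘ₗ slice β)
      (fun j => ∑ δ, (qs β δ • (Bop T (ls 0) δ ∘ₗ Xh c T (Fin.tail ls) j β ∘ₗ slice δ)
        - gf c (ls 0 - ls j.succ) • (Bop T (ls 0) δ ∘ₗ Xh c T (Fin.tail ls) j δ ∘ₗ slice β))) j

theorem Xh_zero (c : ℂ) (T : ℂ → Matrix (Fin 3) (Fin 3) (Module.End ℂ H)) {N : ℕ}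
    (ls : Fin (N + 1) → ℂ) (β : Fin 2) (ψ : (Fin (N + 1) → Fin 2) → H) :
    Xh c T ls 0 β ψ = Fmap T (Fin.tail ls) (slice β ψ) := rfl

theorem Xh_succ (c : ℂ) (T : ℂ → Matrix (Fin 3) (Fin 3) (Module.End ℂ H)) {N : ℕ}
    (ls : Fin (N + 1) → ℂ) (j : Fin N) (β : Fin 2) (ψ : (Fin (N + 1) → Fin 2) → H) :
    Xh c T ls j.succ β ψ =
      ∑ δ, (qs β δ • Bop T (ls 0) δ (Xh c T (Fin.tail ls) j β (slice δ ψ))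
        - gf c (ls 0 - ls j.succ) • Bop T (ls 0) δ (Xh c T (Fin.tail ls) j δ (slice β ψ))) := by
  have : Xh c T ls j.succ β =
      ∑ δ, (qs β δ • (Bop T (ls 0) δ ∘ₗ Xh c T (Fin.tail ls) j β ∘ₗ slice δ)
        - gf c (ls 0 - ls j.succ) • (Bop T (ls 0) δ ∘ₗ Xh c T (Fin.tail ls) j δ ∘ₗ slice β)) := rfl
  rw [this]
  simp

/-- Coefficients of the unwanted terms for `D`. -/
def Zc (c : ℂ) (T : ℂ → Matrix (Fin 3) (Fin 3) (Module.End ℂ H)) :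
    ∀ {N : ℕ}, (Fin N → ℂ) → Fin N → Fin 2 → ((Fin N → Fin 2) → H) → H
  | 0, _, _, _, _ => 0
  | _ + 1, ls, j, γ, ψ =>
    Fin.cases (motive := fun _ => H)
      ((∏ k, (af c (Fin.tail ls k - ls 0))⁻¹) •
        ∑ δ, Fmap T (Fin.tail ls) (Tn c T (ls 0) γ δ (Fin.tail ls) (slice δ ψ)))
      (fun j => ∑ δ, (qs γ δ * (1 + gf c (ls 0 - ls j.succ))) •
        Bop T (ls 0) δ (Zc c T (Fin.tail ls) j γ (slice δ ψ))) j

theorem Zc_zero (c : ℂ) (T : ℂ → Matrix (Fin 3) (Fin 3) (Module.End ℂ H)) {N : ℕ}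
    (ls : Fin (N + 1) → ℂ) (γ : Fin 2) (ψ : (Fin (N + 1) → Fin 2) → H) :
    Zc c T ls 0 γ ψ = (∏ k, (af c (Fin.tail ls k - ls 0))⁻¹) •
        ∑ δ, Fmap T (Fin.tail ls) (Tn c T (ls 0) γ δ (Fin.tail ls) (slice δ ψ)) := rfl

theorem Zc_succ (c : ℂ) (T : ℂ → Matrix (Fin 3) (Fin 3) (Module.End ℂ H)) {N : ℕ}
    (ls : Fin (N + 1) → ℂ) (j : Fin N) (γ : Fin 2) (ψ : (Fin (N + 1) → Fin 2) → H) :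
    Zc c T ls j.succ γ ψ = ∑ δ, (qs γ δ * (1 + gf c (ls 0 - ls j.succ))) •
        Bop T (ls 0) δ (Zc c T (Fin.tail ls) j γ (slice δ ψ)) := rfl

/-- Scalar coefficients for the unwanted terms of `A`. -/
def kap (c : ℂ) (a₁ : ℂ → ℂ) : ∀ {N : ℕ}, (Fin N → ℂ) → Fin N → ℂ
  | 0, _, _ => 0
  | _ + 1, ls, j => Fin.cases (motive := fun _ => ℂ)
      (a₁ (ls 0) * ∏ k, (af c (ls 0 - Fin.tail ls k))⁻¹) (fun j => kap c a₁ (Fin.tail ls) j) j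

/-- Scalar coefficients for the residues. -/
def cc (c : ℂ) : ∀ {N : ℕ}, (Fin N → ℂ) → Fin N → ℂ
  | 0, _, _ => 0
  | _ + 1, ls, j => Fin.cases (motive := fun _ => ℂ)
      (∏ k, af c (Fin.tail ls k - ls 0))
      (fun j => cc c (Fin.tail ls) j * (af c (ls 0 - ls j.succ) * (af c (ls j.succ - ls 0))⁻¹)) j

theorem kap_zero (c : ℂ) (a₁ : ℂ → ℂ) {N : ℕ} (ls : Fin (N + 1) → ℂ) :
    kap c a₁ ls 0 = a₁ (ls 0) * ∏ k, (af c (ls 0 - Fin.tail ls k))⁻¹ := rfl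

theorem kap_succ (c : ℂ) (a₁ : ℂ → ℂ) {N : ℕ} (ls : Fin (N + 1) → ℂ) (j : Fin N) :
    kap c a₁ ls j.succ = kap c a₁ (Fin.tail ls) j := rfl

theorem cc_zero (c : ℂ) {N : ℕ} (ls : Fin (N + 1) → ℂ) :
    cc c ls 0 = ∏ k, af c (Fin.tail ls k - ls 0) := rfl

theorem cc_succ (c : ℂ) {N : ℕ} (ls : Fin (N + 1) → ℂ) (j : Fin N) :
    cc c ls j.succ = cc c (Fin.tail ls) j *
      (af c (ls 0 - ls j.succ) * (af c (ls j.succ - ls 0))⁻¹) := rfl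

theorem kap_cc (c : ℂ) (a₁ : ℂ → ℂ) {N : ℕ} (ls : Fin N → ℂ) (j : Fin N) :
    kap c a₁ ls j * cc c ls j = a₁ (ls j) *
        ∏ k ∈ Finset.univ.erase j, (af c (ls k - ls j) * (af c (ls j - ls k))⁻¹) := by
  have key : ∀ {N : ℕ} (ls : Fin N → ℂ) (j : Fin N), kap c a₁ ls j * cc c ls j = a₁ (ls j) *
      ∏ k, if k = j then 1 else (af c (ls k - ls j) * (af c (ls j - ls k))⁻¹) := by
    intro N
    induction N with
    | zero => intro ls j; exact j.elim0
    | succ N ih =>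
      intro ls j
      rw [Fin.prod_univ_succ]
      refine Fin.cases ?_ (fun j => ?_) j
      · simp only [kap_zero, cc_zero, if_true, Fin.succ_ne_zero, if_false, one_mul,
          Finset.prod_mul_distrib, Fin.tail]
        ring
      · have h := ih (Fin.tail ls) j
        rw [kap_succ, cc_succ, ← mul_assoc, h]
        simp only [(Fin.succ_ne_zero _).symm, if_false, Fin.succ_inj, Fin.tail]
        ring
  rw [key]
  congr 1
  rw [← Finset.mul_prod_erase Finset.univ _ (Finset.mem_univ j)]
  simp only [if_true, one_mul]
  refine Finset.prod_congr rfl fun k hk => ?_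
  rw [if_neg (Finset.ne_of_mem_erase hk)]

theorem cc_ne (c : ℂ) : ∀ {N : ℕ} (ls : Fin N → ℂ) (_ : ∀ j k, j ≠ k → af c (ls j - ls k) ≠ 0)
    (j : Fin N), cc c ls j ≠ 0 := by
  intro N
  induction N with
  | zero => intro ls _ j; exact j.elim0
  | succ N ih =>
    intro ls h j
    refine Fin.cases ?_ (fun j => ?_) j
    · rw [cc_zero]
      exact Finset.prod_ne_zero_iff.2 fun k _ => h _ _ (Fin.succ_ne_zero k)
    · rw [cc_succ]
      refine mul_ne_zero (ih _ (fun i k hik => h _ _ (by simpa using hik)) j) (mul_ne_zero ?_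
        (inv_ne_zero ?_))
      · exact h _ _ (Fin.succ_ne_zero j).symm
      · exact h _ _ (Fin.succ_ne_zero j)

theorem Xh_Tn (c : ℂ) (hc : c ≠ 0) (T : ℂ → Matrix (Fin 3) (Fin 3) (Module.End ℂ H)) :
    ∀ {N : ℕ} (ls : Fin N → ℂ) (_ : ∀ j k, j ≠ k → af c (ls j - ls k) ≠ 0)
    (j : Fin N) (γ β β' : Fin 2) (ψ : (Fin N → Fin 2) → H),
    Xh c T ls j β' (Tn c T (ls j) γ β ls ψ) =
      if β = β' then (cc c ls j * qs γ β) • Zc c T ls j γ ψ else 0 := by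
  intro N
  induction N with
  | zero => intro ls _ j; exact j.elim0
  | succ N ih =>
    intro ls h j γ β β' ψ
    have ih' := ih (Fin.tail ls) (fun i k hik => h _ _ (by simpa using hik))
    refine Fin.cases ?_ (fun j => ?_) j
    · rw [Xh_zero, slice_Tn, Zc_zero, cc_zero, smul_smul]
      have h1 : af c (ls 0 - ls 0) = 0 := by simp [af]
      have h2 : bf c (ls 0 - ls 0) = 1 := by simp [bf, hc]
      have h3 : (∏ k, af c (Fin.tail ls k - ls 0)) * qs γ β *
          (∏ k, (af c (Fin.tail ls k - ls 0))⁻¹) = qs γ β := by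
        rw [mul_right_comm, ← Finset.prod_mul_distrib, Finset.prod_eq_one, one_mul]
        intro k _
        exact mul_inv_cancel₀ (h _ _ (Fin.succ_ne_zero k))
      rw [h1, h2, h3]
      simp only [zero_mul, zero_smul, zero_add, one_mul, eq_comm (a := β') (b := β)]
      split_ifs
      · rw [map_smul, map_sum]
      · simp
    · have e : ls j.succ = Fin.tail ls j := rfl
      have h1 : af c (ls 0 - Fin.tail ls j) ≠ 0 := h _ _ (Fin.succ_ne_zero j).symm
      have h2 : af c (Fin.tail ls j - ls 0) ≠ 0 := h _ _ (Fin.succ_ne_zero j)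
      rw [Xh_succ, Zc_succ, cc_succ]
      simp only [slice_Tn, map_add, map_smul, e, ih' j, apply_ite (Xh c T (Fin.tail ls) j _),
        map_sum, map_zero, bf_eq h1, af_inv h2]
      rw [gf_neg' c (Fin.tail ls j) (ls 0)]
      generalize af c (ls 0 - Fin.tail ls j) = a
      generalize gf c (ls 0 - Fin.tail ls j) = g
      generalize cc c (Fin.tail ls) j = C
      fin_cases γ <;> fin_cases β <;> fin_cases β' <;>
      · simp [qs, Fin.sum_univ_two]
        try module

/-- Commuting `D` through the product of `B`s. -/
theorem D_comm {c : ℂ} {D : Set ℂ} {T : ℂ → Matrix (Fin 3) (Fin 3) (Module.End ℂ H)}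
    (hT : IsRep c gmmp D T) :
    ∀ {N : ℕ} (ls : Fin N → ℂ) (_ : ∀ j, ls j ∈ D)
    (_ : ∀ j k, j ≠ k → af c (ls j - ls k) ≠ 0)
    (l : ℂ) (_ : l ∈ D) (_ : ∀ j, af c (l - ls j) ≠ 0) (_ : ∀ j, af c (ls j - l) ≠ 0)
    (γ β : Fin 2) (ψ : (Fin N → Fin 2) → H),
    T l γ.succ β.succ (Fmap T ls ψ) =
      (∏ j, (af c (ls j - l))⁻¹) • Fmap T ls (Tn c T l γ β ls ψ)
      + ∑ j, (gf c (l - ls j) * qs γ β) • Bop T l β (Zc c T ls j γ ψ) := by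
  intro N
  induction N with
  | zero =>
    intro ls _ _ l _ _ _ γ β ψ
    simp [Fmap_zero, Tn]
  | succ N ih =>
    intro ls hD h l hl h1 h2 γ β ψ
    have ih' := ih (Fin.tail ls) (fun j => hD _) (fun i k hik => h _ _ (by simpa using hik))
    have ihl := ih' l hl (fun j => h1 _) (fun j => h2 _)
    have ihm := ih' (ls 0) (hD 0) (fun j => h _ _ (Fin.succ_ne_zero j).symm)
      (fun j => h _ _ (Fin.succ_ne_zero j))
    have hbb := fun β δ v => rel_BB hT hl (hD 0) (h1 0) β δ v
    have hj : ∀ (j : Fin N) (δ : Fin 2),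
        (qs γ δ * qs β δ) • Bop T (ls 0) δ ((gf c (l - Fin.tail ls j) * qs γ β) •
            Bop T l β (Zc c T (Fin.tail ls) j γ (slice δ ψ)))
        - (gf c (l - ls 0) * qs γ β) • Bop T (ls 0) β ((gf c (l - Fin.tail ls j) * qs γ δ) •
            Bop T l δ (Zc c T (Fin.tail ls) j γ (slice δ ψ)))
        + (gf c (l - ls 0) * qs γ β) • Bop T l β ((gf c (ls 0 - Fin.tail ls j) * qs γ δ) •
            Bop T (ls 0) δ (Zc c T (Fin.tail ls) j γ (slice δ ψ)))
        = (gf c (l - Fin.tail ls j) * qs γ β) • Bop T l β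
          ((qs γ δ * (1 + gf c (ls 0 - Fin.tail ls j))) •
            Bop T (ls 0) δ (Zc c T (Fin.tail ls) j γ (slice δ ψ))) := by
      intro j δ
      have e1 := hbb β δ (Zc c T (Fin.tail ls) j γ (slice δ ψ))
      have e2 := gf_id1 (c := c) (af_ne (h1 0)).1 (af_ne (h 0 j.succ (Fin.succ_ne_zero j).symm)).1
        (af_ne (h1 j.succ)).1
      change gf c (l - Fin.tail ls j) * (1 - gf c (l - ls 0))
        + gf c (l - ls 0) * gf c (ls 0 - Fin.tail ls j) = gf c (l - Fin.tail ls j) *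
          (1 + gf c (ls 0 - Fin.tail ls j)) at e2
      simp only [map_smul]
      linear_combination (norm := module) (-(gf c (l - Fin.tail ls j) * qs γ β * qs γ δ)) • e1
        + (qs γ β * qs γ δ) • e2 • (Bop T l β
            (Bop T (ls 0) δ (Zc c T (Fin.tail ls) j γ (slice δ ψ))))
    rw [Fmap_succ, map_sum, Fin.sum_univ_succ (n := N)]
    simp only [rel_DB hT hl (hD 0) (h1 0), ihl, ihm]
    rw [Fmap_succ, Fin.prod_univ_succ, Zc_zero]
    change _ = ((af c (ls 0 - l))⁻¹ * ∏ j, (af c (Fin.tail ls j - l))⁻¹) • _ + (_ +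
      ∑ j : Fin N, (gf c (l - Fin.tail ls j) * qs γ β) • Bop T l β (∑ δ,
          ((qs γ δ * (1 + gf c (ls 0 - Fin.tail ls j))) •
            Bop T (ls 0) δ (Zc c T (Fin.tail ls) j γ (slice δ ψ)))))
    simp only [map_sum, Finset.smul_sum, ← hj]
    rw [Finset.sum_comm (s := (Finset.univ : Finset (Fin N)))]
    simp only [slice_Tn, map_add, map_smul, apply_ite (Fmap T (Fin.tail ls)), map_zero, map_sum,
      bf_eq (h2 0), Finset.sum_add_distrib, Finset.sum_sub_distrib, smul_add, Finset.smul_sum]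
    rw [gf_neg' c (ls 0) l]
    have ha := h2 0
    generalize af c (ls 0 - l) = a at ha ⊢
    have hq : qs β β * qs β β = 1 := qs_sq β β
    fin_cases β <;>
    · simp [Fin.sum_univ_two, smul_smul]
      field_simp
      module

end Aux2

section Aux3

set_option linter.unusedSimpArgs false

variable {H : Type*} [AddCommGroup H] [Module ℂ H]

/-- Commuting `A` through the product of `B`s. -/
theorem A_comm {c : ℂ} {D : Set ℂ} {T : ℂ → Matrix (Fin 3) (Fin 3) (Module.End ℂ H)}
    (hT : IsRep c gmmp D T) (a₁ : ℂ → ℂ) :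
    ∀ {N : ℕ} (ls : Fin N → ℂ) (_ : ∀ j, ls j ∈ D)
    (_ : ∀ j k, j ≠ k → af c (ls j - ls k) ≠ 0)
    (l : ℂ) (_ : l ∈ D) (_ : ∀ j, af c (l - ls j) ≠ 0) (_ : ∀ j, af c (ls j - l) ≠ 0)
    (ψ : (Fin N → Fin 2) → H) (_ : ∀ l ∈ D, ∀ i, T l 0 0 (ψ i) = a₁ l • ψ i),
    T l 0 0 (Fmap T ls ψ) =
      (a₁ l * ∏ j, (af c (l - ls j))⁻¹) • Fmap T ls ψ
      - ∑ j, (gf c (l - ls j) * kap c a₁ ls j) • ∑ β, Bop T l β (Xh c T ls j β ψ) := by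
  intro N
  induction N with
  | zero =>
    intro ls _ _ l hl _ _ ψ h0
    simp [Fmap_zero, h0 l hl]
  | succ N ih =>
    intro ls hD h l hl h1 h2 ψ h0
    have ih' := ih (Fin.tail ls) (fun j => hD _) (fun i k hik => h _ _ (by simpa using hik))
    have ihl := fun δ => ih' l hl (fun j => h1 _) (fun j => h2 _) (slice δ ψ)
      (fun l hl i => h0 l hl _)
    have ihm := fun δ => ih' (ls 0) (hD 0) (fun j => h _ _ (Fin.succ_ne_zero j).symm)
      (fun j => h _ _ (Fin.succ_ne_zero j)) (slice δ ψ) (fun l hl i => h0 l hl _)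
    have hj : ∀ (j : Fin N),
        ∑ δ, ((1 + gf c (l - ls 0)) • Bop T (ls 0) δ
            ((gf c (l - Fin.tail ls j) * kap c a₁ (Fin.tail ls) j) •
              ∑ β, Bop T l β (Xh c T (Fin.tail ls) j β (slice δ ψ)))
          - gf c (l - ls 0) • Bop T l δ
            ((gf c (ls 0 - Fin.tail ls j) * kap c a₁ (Fin.tail ls) j) •
              ∑ β, Bop T (ls 0) β (Xh c T (Fin.tail ls) j β (slice δ ψ))))
        = (gf c (l - ls j.succ) * kap c a₁ ls j.succ) •
            ∑ β, Bop T l β (Xh c T ls j.succ β ψ) := by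
      intro j
      have e1 := fun δ β v => rel_BB hT (hD 0) hl (h2 0) δ β v
      rw [gf_neg' c (ls 0) l] at e1
      have e2 := gf_id2 (c := c) (af_ne (h1 0)).1 (af_ne (h 0 j.succ (Fin.succ_ne_zero j).symm)).1
        (af_ne (h1 j.succ)).1
      have e : ls j.succ = Fin.tail ls j := rfl
      simp only [Xh_succ, kap_succ, e] at e2 ⊢
      simp only [Fin.sum_univ_two, map_add, map_sub, map_smul, smul_add, smul_sub]
      generalize kap c a₁ (Fin.tail ls) j = K
      generalize gf c (l - Fin.tail ls j) = g1 at *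
      generalize gf c (ls 0 - Fin.tail ls j) = g2 at *
      generalize gf c (l - ls 0) = g3 at *
      have f : ∀ δ β v, ((1 + g3) * g1) • Bop T (ls 0) δ (Bop T l β v)
          = (g1 * qs β δ) • Bop T l β (Bop T (ls 0) δ v)
            + (g3 * g2 - g1 * g2) • Bop T l δ (Bop T (ls 0) β v) := by
        intro δ β v
        rw [qs_comm β δ]
        linear_combination (norm := module) g1 • e1 δ β v
          - e2 • (Bop T l δ (Bop T (ls 0) β v))
      have f00 := f 0 0 (Xh c T (Fin.tail ls) j 0 (slice 0 ψ))
      have f01 := f 0 1 (Xh c T (Fin.tail ls) j 1 (slice 0 ψ))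
      have f10 := f 1 0 (Xh c T (Fin.tail ls) j 0 (slice 1 ψ))
      have f11 := f 1 1 (Xh c T (Fin.tail ls) j 1 (slice 1 ψ))
      linear_combination (norm := module) K • f00 + K • f01 + K • f10 + K • f11
    rw [Fin.sum_univ_succ (n := N)]
    simp only [← hj]
    rw [Finset.sum_comm (s := (Finset.univ : Finset (Fin N))), kap_zero, Fin.prod_univ_succ]
    simp only [Xh_zero]
    simp only [Fmap_succ T ls, map_sum, rel_AB hT hl (hD 0) (h2 0), ihl, ihm]
    change _ = (a₁ l * ((af c (l - ls 0))⁻¹ * ∏ j, (af c (l - Fin.tail ls j))⁻¹)) • _ - _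
    rw [af_inv (h1 0)]
    simp only [map_sub, map_smul, smul_sub, Finset.sum_sub_distrib, Finset.smul_sum, map_sum,
      smul_smul]
    simp only [Fin.sum_univ_two]
    module

/-- Shift of a monodromy matrix by one site. -/
def shf {N : ℕ} (M : Matrix (Fin 2) (Fin 2) (Matrix (Fin N → Fin 2) (Fin N → Fin 2) ℂ)) :
    Matrix (Fin 2) (Fin 2) (Matrix (Fin (N + 1) → Fin 2) (Fin (N + 1) → Fin 2) ℂ) :=
  fun ρ κ σ τ => if σ 0 = τ 0 then
    qs ρ (σ 0) * qs κ (σ 0) * M ρ κ (Fin.tail σ) (Fin.tail τ) else 0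

theorem shf_one {N : ℕ} :
    shf (1 : Matrix (Fin 2) (Fin 2) (Matrix (Fin N → Fin 2) (Fin N → Fin 2) ℂ)) = 1 := by
  funext ρ κ σ τ
  simp only [shf, Matrix.one_apply]
  by_cases h : ρ = κ
  · subst h
    simp only [if_true, qs_sq, one_mul, Matrix.one_apply]
    have : σ = τ ↔ σ 0 = τ 0 ∧ Fin.tail σ = Fin.tail τ := by
      constructor
      · rintro rfl; exact ⟨rfl, rfl⟩
      · rintro ⟨h1, h2⟩
        rw [← Fin.cons_self_tail σ, ← Fin.cons_self_tail τ, h1, h2]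
    simp only [this, ite_and]
  · simp [h]

theorem shf_mul {N : ℕ}
    (M L : Matrix (Fin 2) (Fin 2) (Matrix (Fin N → Fin 2) (Fin N → Fin 2) ℂ)) :
    shf (M * L) = shf M * shf L := by
  funext ρ κ σ τ
  simp only [shf, Matrix.mul_apply, Matrix.sum_apply]
  simp only [sum_cons, Fin.cons_zero, Fin.tail_cons]
  have : ∀ x : Fin 2, (∑ δ : Fin 2, ∑ i : Fin N → Fin 2,
      (if σ 0 = δ then qs ρ (σ 0) * qs x (σ 0) * M ρ x (Fin.tail σ) i else 0) *
      (if δ = τ 0 then qs x δ * qs κ δ * L x κ i (Fin.tail τ) else 0)) =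
      ∑ i : Fin N → Fin 2, (qs ρ (σ 0) * qs x (σ 0) * M ρ x (Fin.tail σ) i) *
        (if σ 0 = τ 0 then qs x (σ 0) * qs κ (σ 0) * L x κ i (Fin.tail τ) else 0) := by
    intro x
    rw [Finset.sum_eq_single (σ 0)]
    · simp
    · intro b _ hb
      simp [hb.symm]
    · simp
  simp only [this]
  split_ifs with h
  · simp only [Finset.mul_sum]
    refine Finset.sum_congr rfl fun x _ => Finset.sum_congr rfl fun i _ => ?_
    linear_combination (-(qs ρ (σ 0) * qs κ (σ 0) * M ρ x (Fin.tail σ) i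
      * L x κ i (Fin.tail τ))) * qs_sq x (σ 0)
  · simp

theorem eps_qs (α β δ : Fin 2) (y : ZMod 2) :
    eps ((ppar α + ppar β) * (ppar δ + y)) = qs α δ * qs β δ * eps ((ppar α + ppar β) * y) := by
  have hy : y = 0 ∨ y = 1 := by revert y; decide
  have h2 : (1 + 1 : ZMod 2) = 0 := by decide
  rcases hy with rfl | rfl <;>
  fin_cases α <;> fin_cases β <;> fin_cases δ <;>
    simp [eps, qs, ppar, h2]

theorem shf_Lmat (c : ℂ) {N : ℕ} (j : Fin N) (l : ℂ) :
    shf (Lmat c j l) = Lmat c j.succ l := by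
  have h1 := shf_one (N := N)
  funext α β σ τ
  have h2 : shf (1 : Matrix (Fin 2) (Fin 2) (Matrix (Fin N → Fin 2) (Fin N → Fin 2) ℂ)) α β σ τ
    = (1 : Matrix (Fin 2) (Fin 2) (Matrix (Fin (N + 1) → Fin 2) (Fin (N + 1) → Fin 2) ℂ))
      α β σ τ := by rw [h1]
  simp only [shf, Matrix.one_apply] at h2
  have h3 : (if σ 0 = τ 0 then qs α (σ 0) * qs β (σ 0) *
      gradedE ppar j β α (Fin.tail σ) (Fin.tail τ) else 0) = gradedE ppar j.succ β α σ τ := by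
    simp only [gradedE]
    have hs : ∑ k ∈ Finset.univ.filter (fun k => k < j.succ), ppar (σ k)
        = ppar (σ 0) + ∑ k ∈ Finset.univ.filter (fun k => k < j), ppar (Fin.tail σ k) := by
      simp only [Finset.sum_filter]
      rw [Fin.sum_univ_succ]
      simp [Fin.tail]
    rw [hs, eps_qs, mul_ite, mul_zero, mul_comm (qs α (σ 0)), ← ite_and]
    refine if_congr ?_ rfl rfl
    constructor
    · rintro ⟨h0, ha, hb, hk⟩
      refine ⟨ha, hb, fun k => ?_⟩
      refine Fin.cases (fun _ => h0) (fun k hkj => hk k (by simpa using hkj)) k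
    · rintro ⟨ha, hb, hk⟩
      exact ⟨hk 0 (Fin.succ_ne_zero j).symm, ha, hb, fun k hkj => hk k.succ (by simpa using hkj)⟩
  simp only [Lmat, Matrix.add_apply, Matrix.smul_apply, smul_eq_mul]
  rw [← h3]
  have h4 : (if α = β then (1 : Matrix (Fin (N + 1) → Fin 2) (Fin (N + 1) → Fin 2) ℂ) else 0) σ τ
    = if σ 0 = τ 0 then qs α (σ 0) * qs β (σ 0) * (if α = β then
      (1 : Matrix (Fin N → Fin 2) (Fin N → Fin 2) ℂ) else 0) (Fin.tail σ) (Fin.tail τ) else 0 :=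
    h2.symm
  rw [h4]
  simp only [shf, Lmat, Matrix.add_apply, Matrix.smul_apply, smul_eq_mul]
  split_ifs <;> ring

theorem Tgp_succ (c : ℂ) {N : ℕ} (ls : Fin (N + 1) → ℂ) (l : ℂ) :
    Tgp c ls l = shf (Tgp c (Fin.tail ls) l) * Lmat c 0 (ls 0 - l) := by
  have key : ∀ (L : List (Fin N))
      (M : Matrix (Fin 2) (Fin 2) (Matrix (Fin N → Fin 2) (Fin N → Fin 2) ℂ)),
      (L.map Fin.succ).foldl (fun acc j => acc * Lmat c j (ls j - l)) (shf M)
      = shf (L.foldl (fun acc j => acc * Lmat c j (Fin.tail ls j - l)) M) := by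
    intro L
    induction L with
    | nil => intro M; rfl
    | cons a L ih =>
      intro M
      simp only [List.map_cons, List.foldl_cons]
      rw [← ih, shf_mul, shf_Lmat]
      rfl
  unfold Tgp
  rw [List.finRange_succ, List.reverse_cons, List.foldl_append, ← List.map_reverse, ← shf_one, key]
  rfl

theorem Tgp_entry (c : ℂ) {N : ℕ} (ls : Fin (N + 1) → ℂ) (l : ℂ) (ρ β s₀ t₀ : Fin 2)
    (s t : Fin N → Fin 2) :
    Tgp c ls l ρ β (Fin.cons s₀ s) (Fin.cons t₀ t) =
      ∑ κ, qs ρ s₀ * qs κ s₀ * Tgp c (Fin.tail ls) l ρ κ s t *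
        ((if κ = β ∧ s₀ = t₀ then af c (ls 0 - l) else 0)
          + (if s₀ = β ∧ t₀ = κ then bf c (ls 0 - l) * qs κ β else 0)) := by
  have hL : ∀ (κ u₀ : Fin 2) (u : Fin N → Fin 2),
      Lmat c (0 : Fin (N + 1)) (ls 0 - l) κ β (Fin.cons u₀ u) (Fin.cons t₀ t)
      = if u = t then ((if κ = β ∧ u₀ = t₀ then af c (ls 0 - l) else 0)
          + (if u₀ = β ∧ t₀ = κ then bf c (ls 0 - l) * qs κ β else 0)) else 0 := by
    intro κ u₀ u
    have h1 : (∀ k : Fin (N + 1), k ≠ 0 → (Fin.cons u₀ u : Fin (N + 1) → Fin 2) k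
        = (Fin.cons t₀ t : Fin (N + 1) → Fin 2) k) ↔ u = t := by
      constructor
      · intro h; funext k; simpa using h k.succ (Fin.succ_ne_zero k)
      · rintro rfl k; refine Fin.cases (fun h => absurd rfl h) (fun k _ => by simp) k
    have h2 : (if κ = β then (1 : Matrix (Fin (N + 1) → Fin 2) (Fin (N + 1) → Fin 2) ℂ) else 0)
      (Fin.cons u₀ u) (Fin.cons t₀ t) = if u = t then (if κ = β ∧ u₀ = t₀ then 1 else 0) else 0 := by
      by_cases hk : κ = β
      · simp only [hk, if_true, Matrix.one_apply, Fin.cons_inj, true_and]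
        rw [← ite_and]
        exact if_congr and_comm rfl rfl
      · simp [hk]
    simp only [Lmat, Matrix.add_apply, Matrix.smul_apply, smul_eq_mul, h2, gradedE, h1,
      Fin.cons_zero, qs]
    by_cases hu : u = t
    · simp [hu, eps]
    · simp [hu]
  rw [Tgp_succ, Matrix.mul_apply, Matrix.sum_apply]
  refine Finset.sum_congr rfl fun κ _ => ?_
  rw [Matrix.mul_apply, sum_cons]
  simp only [hL, shf, Fin.cons_zero, Fin.tail_cons]
  rw [Finset.sum_eq_single s₀]
  · simp
  · intro b _ hb
    simp [hb.symm]
  · simp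

/-- The sign of the diagonal matrix entries in `𝒟`. -/
def zs {N : ℕ} (γ ρ : Fin 2) (s : Fin N → Fin 2) : ℂ :=
  if γ = ρ then 1 else ∏ k, (if s k = 0 then (1 : ℂ) else -1)

theorem zs_cons {N : ℕ} (γ ρ s₀ : Fin 2) (s : Fin N → Fin 2) :
    zs γ ρ (Fin.cons s₀ s : Fin (N + 1) → Fin 2) = qs γ s₀ * qs ρ s₀ * zs γ ρ s := by
  unfold zs
  rw [Fin.prod_univ_succ]
  simp only [Fin.cons_zero, Fin.cons_succ]
  fin_cases γ <;> fin_cases ρ <;> fin_cases s₀ <;> simp [qs]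

theorem Ttil_entry (c : ℂ) (T : ℂ → Matrix (Fin 3) (Fin 3) (Module.End ℂ H)) {N : ℕ}
    (ls : Fin N → ℂ) (l : ℂ) (γ β : Fin 2) (s t : Fin N → Fin 2) :
    TtilMMP c T ls l γ β s t
      = ∑ ρ : Fin 2, (zs γ ρ s * Tgp c ls l ρ β s t) • T l γ.succ ρ.succ := by
  have hD : ∀ ρ u, DcalMMP T N l γ ρ s u = if s = u then zs γ ρ s • T l γ.succ ρ.succ else 0 := by
    intro ρ u
    fin_cases γ <;> fin_cases ρ <;>
      simp [DcalMMP, extOp, Zmat, zs, Matrix.one_apply]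
  rw [TtilMMP, Matrix.mul_apply, Matrix.sum_apply]
  refine Finset.sum_congr rfl fun ρ _ => ?_
  rw [Matrix.mul_apply]
  simp only [hD, ite_mul, zero_mul, Finset.sum_ite_eq, Finset.mem_univ, if_true, Matrix.map_apply,
    extOp]
  rw [smul_mul_smul_comm, mul_one]

theorem Ttil_Tn (c : ℂ) (T : ℂ → Matrix (Fin 3) (Fin 3) (Module.End ℂ H)) (l : ℂ) :
    ∀ {N : ℕ} (ls : Fin N → ℂ) (γ β : Fin 2) (ψ : (Fin N → Fin 2) → H) (s : Fin N → Fin 2),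
    ∑ t, TtilMMP c T ls l γ β s t (ψ t) = Tn c T l γ β ls ψ s := by
  intro N
  induction N with
  | zero =>
    intro ls γ β ψ s
    simp only [Ttil_entry, Tgp, zs]
    have : ∀ t : Fin 0 → Fin 2, t = s := fun t => Subsingleton.elim _ _
    simp [Tn, this, Matrix.one_apply, apply_ite]
    fin_cases γ <;> fin_cases β <;> simp
  | succ N ih =>
    intro ls γ β ψ s
    obtain ⟨s₀, s, rfl⟩ : ∃ s₀ s', s = Fin.cons s₀ s' := ⟨s 0, Fin.tail s, (Fin.cons_self_tail s).symm⟩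
    have e : ∀ t₀ t, TtilMMP c T ls l γ β (Fin.cons s₀ s) (Fin.cons t₀ t)
        = ∑ κ, (qs γ s₀ * qs κ s₀ * ((if κ = β ∧ s₀ = t₀ then af c (ls 0 - l) else 0)
          + (if s₀ = β ∧ t₀ = κ then bf c (ls 0 - l) * qs κ β else 0))) •
            TtilMMP c T (Fin.tail ls) l γ κ s t := by
      intro t₀ t
      simp only [Ttil_entry, Tgp_entry, zs_cons, Finset.mul_sum, Finset.sum_smul, Finset.smul_sum,
        smul_smul]
      rw [Finset.sum_comm]
      refine Finset.sum_congr rfl fun κ _ => Finset.sum_congr rfl fun ρ _ => ?_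
      congr 1
      linear_combination (qs γ s₀ * zs γ ρ s * qs κ s₀ * Tgp c (Fin.tail ls) l ρ κ s t *
        ((if κ = β ∧ s₀ = t₀ then af c (ls 0 - l) else 0)
          + (if s₀ = β ∧ t₀ = κ then bf c (ls 0 - l) * qs κ β else 0))) * qs_sq ρ s₀
    simp only [Tn, Fin.cons_zero, Fin.tail_cons, ← ih, slice_apply]
    rw [sum_cons]
    simp only [e]
    simp only [LinearMap.sum_apply, LinearMap.smul_apply]
    have e' : ∀ t₀ : Fin 2, ∑ t, ∑ κ, (qs γ s₀ * qs κ s₀ * ((if κ = β ∧ s₀ = t₀ then af c (ls 0 - l) else 0)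
          + (if s₀ = β ∧ t₀ = κ then bf c (ls 0 - l) * qs κ β else 0))) •
            (TtilMMP c T (Fin.tail ls) l γ κ s t) (ψ (Fin.cons t₀ t)) =
          ∑ κ, (qs γ s₀ * qs κ s₀ * ((if κ = β ∧ s₀ = t₀ then af c (ls 0 - l) else 0)
          + (if s₀ = β ∧ t₀ = κ then bf c (ls 0 - l) * qs κ β else 0))) •
            ∑ t, (TtilMMP c T (Fin.tail ls) l γ κ s t) (ψ (Fin.cons t₀ t)) := by
      intro t₀
      rw [Finset.sum_comm]
      simp only [Finset.smul_sum]
    simp only [e']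
    fin_cases γ <;> fin_cases β <;> fin_cases s₀ <;>
    · simp [Fin.sum_univ_two, qs]
      try module

end Aux3

/-- First-level reduction theorem for grading `(−,−,+)`: if all components
of `ψ` lie in the vacuum subspace `H₀`, `ψ` is an eigenvector of `str T̃(λ)` with eigenvalue
`Λ̃(λ)`, and the Bethe ansatz equations
`a₁(λ_j) ∏_{k≠j} a(λ_k−λ_j)/a(λ_j−λ_k) = Λ̃(λ_j)` hold, then
`Φ = Σ_i B_{i₁}(λ₁)⋯B_{i_N}(λ_N) ψ^{i₁…i_N}` satisfies `t(λ)Φ = Λ(λ)Φ` with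
`t(λ) = −T^1_1(λ) − T^2_2(λ) + T^3_3(λ)` and
`Λ(λ) = −a₁(λ) ∏_j 1/a(λ−λ_j) − Λ̃(λ) ∏_j 1/a(λ_j−λ)`. -/
theorem first_level_reduction (c : ℂ) (hc : c ≠ 0) {H : Type*} [AddCommGroup H]
    [Module ℂ H] (D : Set ℂ) (T : ℂ → Matrix (Fin 3) (Fin 3) (Module.End ℂ H))
    (hT : IsRep c gmmp D T) (a₁ Λt : ℂ → ℂ) {N : ℕ} (ls : Fin N → ℂ)
    (hls : ∀ j, ls j ∈ D) (hdist : Function.Injective ls)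
    (ha2 : ∀ j k, j ≠ k → af c (ls j - ls k) ≠ 0)
    (ψ : (Fin N → Fin 2) → H)
    (hψ0 : ∀ i, memH0 T D a₁ (ψ i))
    (hψ : ∀ l ∈ D, ∀ s, (∑ t, strTtilMMP c T ls l s t (ψ t)) = Λt l • ψ s)
    (hbae : ∀ j, a₁ (ls j) *
        ∏ k ∈ Finset.univ.erase j, (af c (ls k - ls j) * (af c (ls j - ls k))⁻¹)
      = Λt (ls j)) :
    ∀ l ∈ D, (∀ j, af c (l - ls j) ≠ 0) → (∀ j, af c (ls j - l) ≠ 0) →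
      (-(T l 0 0) - T l 1 1 + T l 2 2) (∑ i, BBrow T ls i (ψ i))
        = (-(a₁ l) * ∏ j, (af c (l - ls j))⁻¹
            - Λt l * ∏ j, (af c (ls j - l))⁻¹) • ∑ i, BBrow T ls i (ψ i) := by
  intro l hl h1 h2
  have hA := A_comm hT a₁ ls hls ha2 l hl h1 h2 ψ (fun l hl i => (hψ0 i l hl).1)
  have hD := fun γ β => D_comm hT ls hls ha2 l hl h1 h2 γ β ψ
  have hE : ∀ l ∈ D, Tn c T l 0 0 ls ψ - Tn c T l 1 1 ls ψ = Λt l • ψ := by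
    intro l hl
    funext s
    rw [Pi.sub_apply, Pi.smul_apply, ← hψ l hl s, ← Ttil_Tn, ← Ttil_Tn, ← Finset.sum_sub_distrib]
    rfl
  have hXZ : ∀ (j : Fin N) (β : Fin 2), Zc c T ls j β ψ = kap c a₁ ls j • Xh c T ls j β ψ := by
    intro j β
    have h3 := congrArg (Xh c T ls j β) (hE (ls j) (hls j))
    rw [map_sub, map_smul, Xh_Tn c hc T ls ha2, Xh_Tn c hc T ls ha2, ← hbae j,
      ← kap_cc, mul_comm (kap c a₁ ls j), mul_smul _ (kap c a₁ ls j)] at h3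
    have h4 : cc c ls j • Zc c T ls j β ψ = cc c ls j • kap c a₁ ls j • Xh c T ls j β ψ := by
      rw [← h3]
      fin_cases β <;> simp [qs]
    exact smul_right_injective H (cc_ne c ls ha2 j) h4
  have hD0 := hD 0 0
  have hD1 := hD 1 1
  have hF := congrArg (Fmap T ls) (hE l hl)
  rw [map_sub, map_smul] at hF
  rw [← Fmap_apply]
  change -(T l 0 0 (Fmap T ls ψ)) - T l (0 : Fin 2).succ (0 : Fin 2).succ (Fmap T ls ψ)
    + T l (1 : Fin 2).succ (1 : Fin 2).succ (Fmap T ls ψ) = _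
  rw [hA, hD0, hD1]
  simp only [hXZ, map_smul, Fin.sum_univ_two, smul_add, smul_smul, Finset.sum_add_distrib]
  have q0 : qs 0 0 = 1 := by simp [qs]
  have q1 : qs 1 1 = -1 := by simp [qs]
  simp only [q0, q1, mul_one, mul_neg, neg_mul, neg_smul, Finset.sum_neg_distrib]
  linear_combination (norm := module) (-(∏ j, (af c (ls j - l))⁻¹)) • hF

end Gl12
end
end

section
/- gl(1|2) representations yield representations of the graded Yang–Baxter algebra: let p : {1,2,3} → ℤ₂ be one of the three gradings (+,−,−), (−,+,−), (−,−,+), let V be a complex vector space, and let E^α_β ∈ End(V) (α,β ∈ {1,2,3}) satisfy the gl(1|2) relations E^α_β E^γ_δ − (−1)^{(p(α)+p(β))(p(γ)+p(δ))} E^γ_δ E^α_β = δ^α_δ E^γ_β − (−1)^{(p(α)+p(β))(p(γ)+p(δ))} δ^γ_β E^α_δ for all indices. Then the L-matrix L(λ) with entries L^α_β(λ) = a(λ) δ^α_β + b(λ)(−1)^{p(α)p(β)} E^α_β is a representation of the graded Yang–Baxter algebra with grading p: ř_p(λ−μ)(L(λ) ⊗_p L(μ)) = (L(μ) ⊗_p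 L(λ)) ř_p(λ−μ) for all λ, μ with λ + ic ≠ 0, μ + ic ≠ 0, λ − μ + ic ≠ 0. -/
open scoped BigOperators

noncomputable section

namespace Gl12

/-- The L-matrix `L^α_β(λ) = a(λ) δ^α_β + b(λ)(−1)^{p(α)p(β)} E^α_β` built from a
gl(1|2) representation `E`. -/
def LfromE (c : ℂ) {V : Type*} [AddCommGroup V] [Module ℂ V] (p : Fin 3 → ZMod 2)
    (E : Matrix (Fin 3) (Fin 3) (Module.End ℂ V)) (l : ℂ) :
    Matrix (Fin 3) (Fin 3) (Module.End ℂ V) := fun α β =>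
  af c l • (if α = β then (1 : Module.End ℂ V) else 0)
    + (bf c l * eps (p α * p β)) • E α β

set_option maxHeartbeats 4000000 in
/-- gl(1|2) representations yield representations of the graded
Yang–Baxter algebra: if `p` is one of the three gradings `(+,−,−)`, `(−,+,−)`, `(−,−,+)`
and the operators `E^α_β` satisfy the gl(1|2) superbracket relations compatible with `p`,
then `ř_p(λ−μ)(L(λ) ⊗_p L(μ)) = (L(μ) ⊗_p L(λ)) ř_p(λ−μ)`. -/
theorem gl12_rep_yields_yba_rep (c : ℂ) (hc : c ≠ 0) {V : Type*} [AddCommGroup V]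
    [Module ℂ V] (p : Fin 3 → ZMod 2) (hp : p = gpmm ∨ p = gmpm ∨ p = gmmp)
    (E : Matrix (Fin 3) (Fin 3) (Module.End ℂ V))
    (hE : ∀ α β γ δ : Fin 3,
      E α β * E γ δ - eps ((p α + p β) * (p γ + p δ)) • (E γ δ * E α β)
        = (if α = δ then E γ β else 0)
          - eps ((p α + p β) * (p γ + p δ)) • (if γ = β then E α δ else 0)) :
    ∀ l m : ℂ, l + Complex.I * c ≠ 0 → m + Complex.I * c ≠ 0 →
      l - m + Complex.I * c ≠ 0 →
      cmulE (Rcheck c p (l - m)) (stp p p p (LfromE c p E l) (LfromE c p E m))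
        = emulC (stp p p p (LfromE c p E m) (LfromE c p E l)) (Rcheck c p (l - m)) := by
  intro l m hl hm hlm
  ext1 ⟨α, γ⟩ ⟨β, δ⟩
  have h1 : cmulE (Rcheck c p (l - m)) (stp p p p (LfromE c p E l) (LfromE c p E m)) (α, γ) (β, δ)
      = (af c (l - m) * eps (p γ * p α)) •
          (eps ((p γ + p β) * p α) • (LfromE c p E l γ β * LfromE c p E m α δ))
        + bf c (l - m) •
          (eps ((p α + p β) * p γ) • (LfromE c p E l α β * LfromE c p E m γ δ)) := by
    simp only [cmulE, Rcheck, Rmat, stp, add_smul, Finset.sum_add_distrib, Fintype.sum_prod_type]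
    simp
  have h2 : emulC (stp p p p (LfromE c p E m) (LfromE c p E l)) (Rcheck c p (l - m)) (α, γ) (β, δ)
      = (af c (l - m) * eps (p β * p δ)) •
          (eps ((p α + p δ) * p γ) • (LfromE c p E m α δ * LfromE c p E l γ β))
        + bf c (l - m) •
          (eps ((p α + p β) * p γ) • (LfromE c p E m α β * LfromE c p E l γ δ)) := by
    simp only [emulC, Rcheck, Rmat, stp, add_smul, Finset.sum_add_distrib, Fintype.sum_prod_type,
      mul_ite, mul_one, mul_zero, ite_smul, zero_smul]
    simp [Finset.sum_ite_eq, Finset.sum_ite_eq', ite_smul]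
  rw [h1, h2]
  have hh := sub_eq_iff_eq_add.mp (hE γ β α δ)
  have e0 : eps 0 = 1 := by simp [eps]
  have e1 : eps 1 = -1 := by simp [eps]
  have e2 : (1 : ZMod 2) + 1 = 0 := by decide
  have z : ∀ x : ZMod 2, x = 0 ∨ x = 1 := by decide
  simp only [LfromE, add_mul, mul_add, smul_mul_assoc, mul_smul_comm, hh]
  clear hh h1 h2 hE hp
  simp only [af, bf]
  generalize Complex.I * c = h at *
  rcases z (p α) with ha | ha <;> rcases z (p γ) with hg | hg <;>
    rcases z (p β) with hb | hb <;> rcases z (p δ) with hd | hd <;>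
    simp only [ha, hb, hg, hd, e0, e1, e2, mul_zero, zero_mul, mul_one, one_mul, add_zero,
      zero_add] <;>
    by_cases q1 : α = β <;> by_cases q2 : γ = δ <;> by_cases q3 : γ = β <;> by_cases q4 : α = δ <;>
    (try subst q1) <;> (try subst q2) <;> (try subst q3) <;> (try subst q4) <;>
    first
    | contradiction
    | exact absurd (ha.symm.trans hb) (by decide)
    | exact absurd (hg.symm.trans hd) (by decide)
    | exact absurd (hg.symm.trans hb) (by decide)
    | exact absurd (ha.symm.trans hd) (by decide)
    | (simp only [*, if_true, if_false, smul_zero, mul_zero, zero_mul, mul_one, one_mul]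
       match_scalars <;> field_simp <;> ring)

end Gl12
end
end
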